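/- arXiv:0908.1688 — 2 statements merged into one kernel-verified Lean document; each statement's English description precedes it below -/
import Mathlib

section
/- Let k be a field of characteristic zero and let R₀ and R₁ be commutative algebras finitely generated over k such that R₀ and R₁ are normal integral domains, R₀ is a k-subalgebra of R₁ (i.e., the structure map R₀ → R₁ is an injective k-algebra homomorphism), and R₁ is finite as an R₀-module. Let I be an ideal of R₀ such that the quotient ring R₁/IR₁ is a normal integral domain. Then R₀/I is a normal integral domain. -/
/-!
Let `R` be a normal domain containing `ℚ`, `R → S` an integral extension and `P` a prime of `S` over
`0`. The normalized trace from `Frac (S ⧸ P)` to `Frac R` maps `S` into `R` and `1` to `1`, so it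
splits `R → S` as a map of `R`-modules. Hence `J S ∩ R = J` for every ideal `J` of `R`, a property
which passes to `R ⧸ I → S ⧸ I S`. For principal ideals it says that divisibility between elements
of `R ⧸ I` can be tested in `S ⧸ I S`: if `S ⧸ I S` is a normal domain and `a / b` is
integral over `R ⧸ I`, then `b ∣ a` in `S ⧸ I S`, hence already in `R ⧸ I`.
-/

section NormalizedTrace

variable {R K L : Type*} [CommRing R] [Field K] [Field L] [Algebra R K] [Algebra K L]
  [Algebra R L] [IsScalarTower R K L]

theorem isIntegral_normalizedTrace [Algebra ℚ R] [CharZero K] [Algebra.IsAlgebraic K L] {x : L}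
    (hx : IsIntegral R x) : IsIntegral R (Algebra.normalizedTrace K L x) := by
  have integral_gen : IsIntegral R (IntermediateField.AdjoinSimple.gen K x) :=
    IntermediateField.coe_isIntegral_iff.mp hx
  have : FiniteDimensional K (IntermediateField.adjoin K {x}) :=
    IntermediateField.adjoin.finiteDimensional (Algebra.IsIntegral.isIntegral x)
  set d := Module.finrank K (IntermediateField.adjoin K {x})
  have inv_degree : (d : K)⁻¹ = algebraMap R K (algebraMap ℚ R (d : ℚ)⁻¹) := by
    rw [← RingHom.comp_apply, map_inv₀, map_natCast]
  rw [Algebra.normalizedTrace_def, inv_degree, smul_eq_mul]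
  exact isIntegral_algebraMap.mul (Algebra.isIntegral_trace integral_gen)

theorem exists_linearMap_apply_one_of_algHom [IsDomain R] [IsIntegrallyClosed R] [Algebra ℚ R]
    [IsFractionRing R K] [Algebra.IsAlgebraic K L] {S : Type*} [CommRing S] [Algebra R S]
    [Algebra.IsIntegral R S] (φ : S →ₐ[R] L) : ∃ T : S →ₗ[R] R, T 1 = 1 := by
  have : CharZero R := algebraRat.charZero R
  have : CharZero K := IsFractionRing.charZero_of_isFractionRing R
  let trace : S →ₗ[R] K := (Algebra.normalizedTrace K L).restrictScalars R ∘ₗ φ.toLinearMap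
  have trace_mem_range (s : S) : trace s ∈ LinearMap.range (Algebra.linearMap R K) :=
    IsIntegrallyClosed.isIntegral_iff.mp <|
      isIntegral_normalizedTrace ((Algebra.IsIntegral.isIntegral s).map φ)
  have trace_one : trace 1 = 1 := by
    have := Algebra.normalizedTrace_algebraMap_apply K K L 1
    simpa [trace] using this
  let e := LinearEquiv.ofInjective (Algebra.linearMap R K) (IsFractionRing.injective R K)
  refine ⟨e.symm ∘ₗ trace.codRestrict _ trace_mem_range, ?_⟩
  rw [LinearMap.comp_apply, LinearEquiv.coe_coe, LinearEquiv.symm_apply_eq]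
  exact Subtype.ext (trace_one.trans (map_one (algebraMap R K)).symm)

end NormalizedTrace

theorem exists_linearMap_apply_one_of_isIntegral (R S : Type*) [CommRing R] [IsDomain R]
    [IsIntegrallyClosed R] [Algebra ℚ R] [CommRing S] [Algebra R S] [FaithfulSMul R S]
    [Algebra.IsIntegral R S] : ∃ T : S →ₗ[R] R, T 1 = 1 := by
  obtain ⟨⟨P, _, _⟩⟩ := Ideal.nonempty_primesOver (S := S) (⊥ : Ideal R)
  have : FaithfulSMul R (S ⧸ P) := by
    rw [faithfulSMul_iff_algebraMap_injective, injective_iff_map_eq_zero]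
    intro r hr
    rwa [← Ideal.mem_bot, Ideal.mem_of_liesOver P, ← Ideal.Quotient.eq_zero_iff_mem]
  let := FractionRing.liftAlgebra R (FractionRing (S ⧸ P))
  exact exists_linearMap_apply_one_of_algHom (K := FractionRing R)
    (IsScalarTower.toAlgHom R S (FractionRing (S ⧸ P)))

/-- A ring homomorphism `f : A → B` is cyclically pure if `I B ∩ A = I` for every ideal `I` of `A`,
where `I B ∩ A` is written as the preimage under `f` of the ideal generated by `f '' I`. -/
def IsCyclicallyPure {A B : Type*} [CommRing A] [CommRing B] (f : A →+* B) : Prop :=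
  ∀ I : Ideal A, (I.map f).comap f = I

theorem isCyclicallyPure_algebraMap_of_linearMap {A B : Type*} [CommRing A] [CommRing B]
    [Algebra A B] (T : B →ₗ[A] A) (hT : T 1 = 1) : IsCyclicallyPure (algebraMap A B) := by
  refine fun I => le_antisymm (fun a ha => ?_) Ideal.le_comap_map
  have map_le : ((I.map (algebraMap A B)).restrictScalars A).map T ≤ I := by
    rw [← I.smul_top_eq_map, Submodule.map_smul'']
    exact Ideal.mul_le_left (I := I)
  have T_algebraMap : T (algebraMap A B a) = a := by
    rw [Algebra.algebraMap_eq_smul_one, map_smul, hT, smul_eq_mul, mul_one]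
  exact T_algebraMap ▸ map_le (Submodule.mem_map_of_mem ha)

theorem injective_of_dvd_of_map_dvd {A B : Type*} [CommRing A] [CommRing B] {f : A →+* B}
    (hdvd : ∀ a b, f b ∣ f a → b ∣ a) : Function.Injective f := by
  refine (injective_iff_map_eq_zero f).mpr fun a ha => zero_dvd_iff.mp (hdvd a 0 ?_)
  rw [ha, map_zero]

theorem isIntegrallyClosed_of_dvd_of_map_dvd {A B : Type*} [CommRing A] [CommRing B] [IsDomain B]
    [IsIntegrallyClosed B] {f : A →+* B} (hdvd : ∀ a b, f b ∣ f a → b ∣ a) :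
    IsIntegrallyClosed A := by
  have hf : Function.Injective f := injective_of_dvd_of_map_dvd hdvd
  have : IsDomain A := hf.isDomain f
  refine (isIntegrallyClosed_iff (FractionRing A)).mpr fun {x} hx => ?_
  obtain ⟨a, b, hb, rfl⟩ := IsFractionRing.div_surjective (A := A) x
  let g : FractionRing A →+* FractionRing B := IsFractionRing.map hf
  have g_algebraMap (y : A) : g (algebraMap A _ y) = algebraMap B _ (f y) :=
    IsLocalization.map_eq _ y
  have integral_map : IsIntegral B (g (algebraMap A _ a / algebraMap A _ b)) :=
    hx.map_of_comp_eq f g (RingHom.ext fun y => (g_algebraMap y).symm)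
  obtain ⟨c, hc⟩ := IsIntegrallyClosed.isIntegral_iff.mp integral_map
  have b_ne_zero : algebraMap A (FractionRing A) b ≠ 0 :=
    IsFractionRing.to_map_ne_zero_of_mem_nonZeroDivisors hb
  have map_eq_mul : f a = f b * c := by
    apply IsFractionRing.injective B (FractionRing B)
    rw [map_mul, hc, ← g_algebraMap, ← g_algebraMap, ← map_mul, mul_div_cancel₀ _ b_ne_zero]
  obtain ⟨q, rfl⟩ := hdvd a b ⟨c, map_eq_mul⟩
  exact ⟨q, by rw [map_mul, mul_div_cancel_left₀ _ b_ne_zero]⟩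

namespace IsCyclicallyPure

variable {A B : Type*} [CommRing A] [CommRing B] {f : A →+* B}

theorem map_dvd_map_iff (hf : IsCyclicallyPure f) {a b : A} : f b ∣ f a ↔ b ∣ a := by
  rw [← Ideal.mem_span_singleton, ← Ideal.mem_span_singleton, ← hf (Ideal.span {b}),
    Ideal.mem_comap, Ideal.map_span, Set.image_singleton]

theorem injective (hf : IsCyclicallyPure f) : Function.Injective f :=
  injective_of_dvd_of_map_dvd fun _ _ => hf.map_dvd_map_iff.mp

theorem quotientMap (hf : IsCyclicallyPure f) (I : Ideal A) :
    IsCyclicallyPure (Ideal.quotientMap (I.map f) f Ideal.le_comap_map) := by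
  refine fun J => le_antisymm (fun x hx => ?_) Ideal.le_comap_map
  obtain ⟨a, rfl⟩ := Ideal.Quotient.mk_surjective x
  set J' := J.comap (Ideal.Quotient.mk I) with hJ'
  have map_J : J.map (Ideal.quotientMap (I.map f) f Ideal.le_comap_map) =
      (J'.map f).map (Ideal.Quotient.mk (I.map f)) := by
    rw [← Ideal.map_comap_of_surjective _ Ideal.Quotient.mk_surjective J, Ideal.map_map,
      Ideal.quotientMap_comp_mk, Ideal.map_map]
  have I_le : I ≤ J' := by
    rw [hJ', ← Ideal.map_le_iff_le_comap, Ideal.map_quotient_self]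
    exact bot_le
  rw [Ideal.mem_comap, map_J, Ideal.quotientMap_mk,
    Ideal.mem_quotient_iff_mem (Ideal.map_mono I_le)] at hx
  exact (hf J').le hx

theorem isIntegrallyClosed (hf : IsCyclicallyPure f) [IsDomain B] [IsIntegrallyClosed B] :
    IsIntegrallyClosed A :=
  isIntegrallyClosed_of_dvd_of_map_dvd fun _ _ => hf.map_dvd_map_iff.mp

end IsCyclicallyPure

theorem stmt_0_general (R S : Type*) [CommRing R] [IsDomain R] [IsIntegrallyClosed R] [Algebra ℚ R]
    [CommRing S] [Algebra R S] [FaithfulSMul R S] [Algebra.IsIntegral R S] (I : Ideal R)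
    [IsDomain (S ⧸ I.map (algebraMap R S))] [IsIntegrallyClosed (S ⧸ I.map (algebraMap R S))] :
    IsDomain (R ⧸ I) ∧ IsIntegrallyClosed (R ⧸ I) := by
  obtain ⟨T, hT⟩ := exists_linearMap_apply_one_of_isIntegral R S
  have pure_quotientMap := (isCyclicallyPure_algebraMap_of_linearMap T hT).quotientMap I
  exact ⟨pure_quotientMap.injective.isDomain _, pure_quotientMap.isIntegrallyClosed⟩

/-- Lemma 4.5 (lem:splitnormal): if `R₀ ⊆ R₁` are finitely generated normal
domains over a field `k` of characteristic zero with `R₁` finite over `R₀`,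
and `I` is an ideal of `R₀` such that `R₁ ⧸ I·R₁` is a normal domain,
then `R₀ ⧸ I` is a normal domain. -/
theorem stmt_0 (k R₀ R₁ : Type*) [Field k] [CharZero k]
    [CommRing R₀] [CommRing R₁] [IsDomain R₀] [IsDomain R₁]
    [Algebra k R₀] [Algebra k R₁] [Algebra R₀ R₁] [IsScalarTower k R₀ R₁]
    [Algebra.FiniteType k R₀] [Algebra.FiniteType k R₁]
    [IsIntegrallyClosed R₀] [IsIntegrallyClosed R₁]
    (hinj : Function.Injective (algebraMap R₀ R₁))
    [Module.Finite R₀ R₁]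
    (I : Ideal R₀)
    (hdom : IsDomain (R₁ ⧸ I.map (algebraMap R₀ R₁)))
    (hnorm : IsIntegrallyClosed (R₁ ⧸ I.map (algebraMap R₀ R₁))) :
    IsDomain (R₀ ⧸ I) ∧ IsIntegrallyClosed (R₀ ⧸ I) := by
  let : Algebra ℚ R₀ := Algebra.compHom R₀ (algebraMap ℚ k)
  have : FaithfulSMul R₀ R₁ := (faithfulSMul_iff_algebraMap_injective R₀ R₁).mpr hinj
  exact stmt_0_general R₀ R₁ I
end

section
/- Let A be an integral domain with fraction field K, and let Ā be a subring of K containing (the canonical image of) A. If the inclusion A → Ā admits an A-linear retraction, i.e., an A-module homomorphism π : Ā → A restricting to the identity on A, then Ā equals A (every element of Ā lies in the image of A). -/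
/-!
The inclusion `Ā → K` and the retraction `Ā → A` followed by `A → K` are `A`-linear maps which agree
on `A`. Every element of `Ā` is carried into `A` by some denominator, and denominators act
injectively on `K`, so the two maps are equal. The same argument applies to any localization in
place of `K`, and to modules.
-/

section LocalizedModule

variable {R N N' P : Type*} [CommSemiring R] [AddCommMonoid N] [AddCommMonoid N']
  [AddCommMonoid P] [Module R N] [Module R N'] [Module R P]
  (f : N →ₗ[R] N') {p : Submodule R N'} (hp : ∀ n, f n ∈ p)

theorem linearMap_eq_of_comp_codRestrict_eq (M : Submonoid R) [IsLocalizedModule M f]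
    (hP : ∀ s ∈ M, IsSMulRegular P s) {g h : p →ₗ[R] P}
    (hgh : g ∘ₗ f.codRestrict p hp = h ∘ₗ f.codRestrict p hp) : g = h := by
  ext x
  obtain ⟨⟨n, s⟩, hsx⟩ := IsLocalizedModule.surj M f (x : N')
  have hsx' : (s : R) • x = f.codRestrict p hp n := Subtype.ext hsx
  refine hP s s.2 ?_
  calc
    (s : R) • g x = g (f.codRestrict p hp n) := by rw [← map_smul, hsx']
    _ = h (f.codRestrict p hp n) := LinearMap.congr_fun hgh n
    _ = (s : R) • h x := by rw [← hsx', map_smul]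

theorem eq_range_of_comp_codRestrict_eq_id (M : Submonoid R) [IsLocalizedModule M f]
    (π : p →ₗ[R] N) (hπ : π ∘ₗ f.codRestrict p hp = LinearMap.id) : p = LinearMap.range f := by
  have hfπ : f ∘ₗ π = p.subtype := by
    refine linearMap_eq_of_comp_codRestrict_eq f hp M
      (fun s hs ↦ IsLocalizedModule.smul_injective f (⟨s, hs⟩ : M)) ?_
    rw [LinearMap.comp_assoc, hπ, LinearMap.comp_id, LinearMap.subtype_comp_codRestrict]
  refine le_antisymm (fun x hx ↦ ⟨π ⟨x, hx⟩, LinearMap.congr_fun hfπ ⟨x, hx⟩⟩) ?_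
  rintro _ ⟨n, rfl⟩
  exact hp n

end LocalizedModule

theorem stmt_3_general {A B : Type*} [CommSemiring A] [CommSemiring B] [Algebra A B]
    (M : Submonoid A) [IsLocalization M B] (S : Subalgebra A B)
    (π : S →ₗ[A] A) (hπ : ∀ a : A, π (algebraMap A S a) = a) : S = ⊥ := by
  apply Subalgebra.toSubmodule_injective
  rw [Algebra.toSubmodule_bot, Submodule.one_eq_range]
  exact eq_range_of_comp_codRestrict_eq_id (Algebra.linearMap A B)
    (p := Subalgebra.toSubmodule S) S.algebraMap_mem M π (LinearMap.ext hπ)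

set_option synthInstance.maxHeartbeats 1000000 in
/-- Final step of the proof of Lemma 4.5: a subring `Ā` of the fraction field
of a domain `A` containing `A` such that the inclusion `A → Ā` admits an
`A`-linear retraction must equal `A`. -/
theorem stmt_3 (A : Type*) [CommRing A] [IsDomain A]
    (S : Subalgebra A (FractionRing A))
    (π : S →ₗ[A] A) (hπ : ∀ a : A, π (algebraMap A S a) = a) :
    ∀ x ∈ S, ∃ a : A, algebraMap A (FractionRing A) a = x := by
  have hS : S = ⊥ := stmt_3_general (nonZeroDivisors A) S π hπ
  exact fun x hx ↦ Algebra.mem_bot.mp (hS ▸ hx)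
end
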